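/- In the Gaussian denoising model Z = X + ε with ε ~ N(0, σ²I), suppose the MMSE denoiser ψ_σ(z) = E[X|Z=z] equals prox_{φ}(z) for a proper lower-semicontinuous function φ, and prox_φ is single-valued and continuous. Then the negative log-marginal f_Z := −log p_Z satisfies σ²∇f_Z(x) = ∇M_1 φ(x) for all x, and hence f_Z = (1/σ²) M_1 φ + C for a constant C on ℝⁿ. -/

import Mathlib

open scoped RealInnerProductSpace
open Filter Topology MeasureTheory

noncomputable section

/-- Density of the centered Gaussian `N(0, σ²I)` on `ℝⁿ`. -/
def gaussPdf (n : ℕ) (σ : ℝ) (v : EuclideanSpace ℝ (Fin n)) : ℝ :=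
  (2 * Real.pi * σ ^ 2) ^ (-(n : ℝ) / 2) * Real.exp (-‖v‖ ^ 2 / (2 * σ ^ 2))

/-- Marginal density of `Z = X + ε` where `X ~ μ` and `ε ~ N(0, σ²I)`. -/
def pZ (n : ℕ) (σ : ℝ) (μ : Measure (EuclideanSpace ℝ (Fin n)))
    (z : EuclideanSpace ℝ (Fin n)) : ℝ :=
  ∫ x, gaussPdf n σ (z - x) ∂μ

/-- MMSE denoiser `ψ_σ(z) = E[X | Z = z]`. -/
def mmse (n : ℕ) (σ : ℝ) (μ : Measure (EuclideanSpace ℝ (Fin n)))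
    (z : EuclideanSpace ℝ (Fin n)) : EuclideanSpace ℝ (Fin n) :=
  (pZ n σ μ z)⁻¹ • ∫ x, gaussPdf n σ (z - x) • x ∂μ

/-- Lower Moreau envelope with parameter 1 (real-valued via `toReal`). -/
def moreauEnv1 {n : ℕ} (φ : EuclideanSpace ℝ (Fin n) → EReal)
    (x : EuclideanSpace ℝ (Fin n)) : ℝ :=
  (⨅ z, (φ z + ((‖z - x‖ ^ 2 / 2 : ℝ) : EReal))).toReal

/-!
Let `g` be the Gaussian density and `π_z` the law of `X` given `Z = z`. Jensen's inequality for
`exp` gives `log p_Z(y) - log p_Z(z) ≥ ∫ (log g(y - x) - log g(z - x)) dπ_z(x)`, whose right-hand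
side depends on `π_z` only through its mean `ψ_σ(z)`. Hence `-log p_Z` lies below a paraboloid
touching it at `z` with slope `σ⁻² (z - ψ_σ(z))`. Likewise the Moreau envelope of `φ` lies below the
paraboloid obtained by freezing the minimizer `prox_φ(z)`, whose slope at `z` is `z - prox_φ(z)`.
A function with such a paraboloid of fixed curvature at every point has the slopes as its gradient
as soon as they depend continuously on the point. They do here, since `z - ψ_σ(z)` is `1 / p_Z(z)`
times the convolution of the law of `X` with the bounded continuous function `v ↦ g(v) v`.
-/

section Gradient

variable {E : Type*} [NormedAddCommGroup E] [InnerProductSpace ℝ E] [CompleteSpace E]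

theorem hasGradientAt_of_sub_le_inner_add_norm_sq {f : E → ℝ} {f' : E → E} {c : ℝ}
    (h : ∀ x y, f y - f x ≤ ⟪f' x, y - x⟫ + c * ‖y - x‖ ^ 2) {x : E} (hf' : ContinuousAt f' x) :
    HasGradientAt f (f' x) x := by
  rw [hasGradientAt_iff_isLittleO, Asymptotics.isLittleO_iff]
  intro ε hε
  have hsmall : Tendsto (fun y => ‖f' y - f' x‖ + |c| * ‖y - x‖) (𝓝 x) (𝓝 0) := by
    have hcont : ContinuousAt (fun y => ‖f' y - f' x‖ + |c| * ‖y - x‖) x := by fun_prop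
    simpa [ContinuousAt] using hcont
  filter_upwards [hsmall.eventually_le_const hε] with y hy
  have hquad : c * ‖y - x‖ ^ 2 ≤ |c| * ‖y - x‖ ^ 2 := by gcongr; exact le_abs_self c
  have hupper := h x y
  -- Exchanging `x` and `y` turns the upper bound into a lower one, with the slope at `y`.
  have hlower : ⟪f' y, y - x⟫ - c * ‖y - x‖ ^ 2 ≤ f y - f x := by
    have hyx := h y x
    rw [← neg_sub y x, inner_neg_right, norm_neg] at hyx
    linarith
  have hslope : -⟪f' y - f' x, y - x⟫ ≤ ‖f' y - f' x‖ * ‖y - x‖ :=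
    (neg_le_abs _).trans (abs_real_inner_le_norm _ _)
  rw [inner_sub_left] at hslope
  have hslope_nonneg : 0 ≤ ‖f' y - f' x‖ * ‖y - x‖ := by positivity
  calc ‖f y - f x - ⟪f' x, y - x⟫‖
      ≤ (‖f' y - f' x‖ + |c| * ‖y - x‖) * ‖y - x‖ :=
        abs_le.2 ⟨by linarith, by linarith⟩
    _ ≤ ε * ‖y - x‖ := by gcongr

theorem exists_eq_add_const_of_hasGradientAt {f g : E → ℝ} {f' : E → E}
    (hf : ∀ x, HasGradientAt f (f' x) x) (hg : ∀ x, HasGradientAt g (f' x) x) :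
    ∃ C, ∀ x, f x = g x + C := by
  obtain ⟨C, hC⟩ := isOpen_univ.exists_eq_add_of_fderiv_eq isPreconnected_univ
    (fun x _ => (hf x).differentiableAt.differentiableWithinAt)
    (fun x _ => (hg x).differentiableAt.differentiableWithinAt)
    (fun x _ => (hf x).hasFDerivAt.fderiv.trans (hg x).hasFDerivAt.fderiv.symm)
  exact ⟨C, fun x => hC (Set.mem_univ x)⟩

end Gradient

section Tilted

variable {α : Type*} [MeasurableSpace α] {μ : Measure α}

theorem integral_sub_tilted_le_log_integral_exp_sub [NeZero μ] {f g : α → ℝ}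
    (hf : Integrable (fun x => Real.exp (f x)) μ) (hg : Integrable (fun x => Real.exp (g x)) μ)
    (hgf : Integrable (fun x => g x - f x) (μ.tilted f)) :
    ∫ x, (g x - f x) ∂μ.tilted f ≤
      Real.log (∫ x, Real.exp (g x) ∂μ) - Real.log (∫ x, Real.exp (f x) ∂μ) := by
  have := isProbabilityMeasure_tilted hf
  have hexp : Integrable (fun x => Real.exp (g x - f x)) (μ.tilted f) := by
    rw [integrable_tilted_iff hf]
    simpa only [smul_eq_mul, ← Real.exp_add, add_sub_cancel] using hg
  have hjensen : Real.exp (∫ x, (g x - f x) ∂μ.tilted f) ≤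
      (∫ x, Real.exp (g x) ∂μ) / ∫ x, Real.exp (f x) ∂μ :=
    calc Real.exp (∫ x, (g x - f x) ∂μ.tilted f)
        ≤ ∫ x, Real.exp (g x - f x) ∂μ.tilted f :=
          convexOn_exp.map_integral_le Real.continuous_exp.continuousOn isClosed_univ
            (ae_of_all _ fun _ => Set.mem_univ _) hgf hexp
      _ = (∫ x, Real.exp (g x) ∂μ) / ∫ x, Real.exp (f x) ∂μ := by
          simp only [integral_exp_tilted, Pi.add_apply, add_sub_cancel]
  rw [← Real.log_div (integral_exp_pos hg).ne' (integral_exp_pos hf).ne']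
  exact (Real.le_log_iff_exp_le (div_pos (integral_exp_pos hg) (integral_exp_pos hf))).2 hjensen

end Tilted

section Convolution

variable {G F : Type*} [AddGroup G] [TopologicalSpace G] [ContinuousSub G]
  [SecondCountableTopology G] [MeasurableSpace G] [OpensMeasurableSpace G]
  [NormedAddCommGroup F] {μ : Measure G} [IsFiniteMeasure μ] {h : G → F} {C : ℝ}

theorem integrable_comp_sub_of_bounded (hh : Continuous h) (hC : ∀ v, ‖h v‖ ≤ C) (z : G) :
    Integrable (fun x => h (z - x)) μ :=
  .of_bound (hh.comp (continuous_const.sub continuous_id)).aestronglyMeasurable C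
    (ae_of_all _ fun x => hC (z - x))

theorem continuous_integral_comp_sub_of_bounded [NormedSpace ℝ F] (hh : Continuous h)
    (hC : ∀ v, ‖h v‖ ≤ C) : Continuous fun z => ∫ x, h (z - x) ∂μ :=
  continuous_of_dominated (fun z => (integrable_comp_sub_of_bounded hh hC z).1)
    (fun z => ae_of_all _ fun x => hC (z - x)) (integrable_const C)
    (ae_of_all _ fun _ => hh.comp (continuous_id.sub continuous_const))

end Convolution

section Gaussian

variable {n : ℕ} {σ : ℝ}

theorem gaussPdf_pos (hσ : σ ≠ 0) (v : EuclideanSpace ℝ (Fin n)) : 0 < gaussPdf n σ v := by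
  unfold gaussPdf
  positivity

theorem continuous_gaussPdf : Continuous (gaussPdf n σ) := by
  unfold gaussPdf
  fun_prop

theorem norm_gaussPdf (v : EuclideanSpace ℝ (Fin n)) : ‖gaussPdf n σ v‖ = gaussPdf n σ v :=
  Real.norm_of_nonneg (by unfold gaussPdf; positivity)

theorem norm_gaussPdf_le (v : EuclideanSpace ℝ (Fin n)) :
    ‖gaussPdf n σ v‖ ≤ (2 * Real.pi * σ ^ 2) ^ (-(n : ℝ) / 2) := by
  rw [norm_gaussPdf]
  refine mul_le_of_le_one_right (by positivity) (Real.exp_le_one_iff.2 ?_)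
  exact div_nonpos_of_nonpos_of_nonneg (neg_nonpos.2 (by positivity)) (by positivity)

theorem mul_exp_neg_sq_div_two_le_one (t : ℝ) : t * Real.exp (-(t ^ 2 / 2)) ≤ 1 := by
  rw [Real.exp_neg, ← div_eq_mul_inv, div_le_one (Real.exp_pos _)]
  linarith [Real.add_one_le_exp (t ^ 2 / 2), sq_nonneg (t - 1)]

theorem norm_gaussPdf_smul_self_le (hσ : σ ≠ 0) (v : EuclideanSpace ℝ (Fin n)) :
    ‖gaussPdf n σ v • v‖ ≤ (2 * Real.pi * σ ^ 2) ^ (-(n : ℝ) / 2) * |σ| := by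
  have hσ_pos : 0 < |σ| := abs_pos.2 hσ
  have hscaled : ‖v‖ * Real.exp (-‖v‖ ^ 2 / (2 * σ ^ 2)) ≤ |σ| := by
    have h := mul_exp_neg_sq_div_two_le_one (‖v‖ / |σ|)
    rw [div_mul_eq_mul_div, div_le_one hσ_pos] at h
    have hexponent : -((‖v‖ / |σ|) ^ 2 / 2) = -‖v‖ ^ 2 / (2 * σ ^ 2) := by
      rw [div_pow, sq_abs]
      ring
    rwa [hexponent] at h
  rw [norm_smul, norm_gaussPdf, gaussPdf, mul_assoc, mul_comm (Real.exp _)]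
  gcongr

theorem log_gaussPdf_sub_log_gaussPdf (hσ : σ ≠ 0) (v w : EuclideanSpace ℝ (Fin n)) :
    Real.log (gaussPdf n σ w) - Real.log (gaussPdf n σ v) =
      (‖v‖ ^ 2 - ‖w‖ ^ 2) / (2 * σ ^ 2) := by
  have hlog (u : EuclideanSpace ℝ (Fin n)) : Real.log (gaussPdf n σ u) =
      Real.log ((2 * Real.pi * σ ^ 2) ^ (-(n : ℝ) / 2)) + -‖u‖ ^ 2 / (2 * σ ^ 2) := by
    rw [gaussPdf, Real.log_mul (by positivity) (Real.exp_ne_zero _), Real.log_exp]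
  rw [hlog, hlog]
  ring

variable (μ : Measure (EuclideanSpace ℝ (Fin n)))

theorem integrable_gaussPdf_sub [IsFiniteMeasure μ] (z : EuclideanSpace ℝ (Fin n)) :
    Integrable (fun x => gaussPdf n σ (z - x)) μ :=
  integrable_comp_sub_of_bounded continuous_gaussPdf norm_gaussPdf_le z

theorem integrable_gaussPdf_sub_smul_sub [IsFiniteMeasure μ] (hσ : σ ≠ 0)
    (z : EuclideanSpace ℝ (Fin n)) :
    Integrable (fun x => gaussPdf n σ (z - x) • (z - x)) μ :=
  integrable_comp_sub_of_bounded (continuous_gaussPdf.smul continuous_id)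
    (norm_gaussPdf_smul_self_le hσ) z

theorem integrable_gaussPdf_sub_smul [IsFiniteMeasure μ] (hσ : σ ≠ 0)
    (z : EuclideanSpace ℝ (Fin n)) : Integrable (fun x => gaussPdf n σ (z - x) • x) μ := by
  have h := ((integrable_gaussPdf_sub (σ := σ) μ z).smul_const z).sub
    (integrable_gaussPdf_sub_smul_sub μ hσ z)
  simpa only [Pi.sub_def, ← smul_sub, sub_sub_cancel] using h

theorem integrable_exp_log_gaussPdf_sub [IsFiniteMeasure μ] (hσ : σ ≠ 0)
    (z : EuclideanSpace ℝ (Fin n)) :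
    Integrable (fun x => Real.exp (Real.log (gaussPdf n σ (z - x)))) μ := by
  simpa only [Real.exp_log (gaussPdf_pos hσ _)] using integrable_gaussPdf_sub μ z

theorem integral_exp_log_gaussPdf_sub (hσ : σ ≠ 0) (z : EuclideanSpace ℝ (Fin n)) :
    ∫ x, Real.exp (Real.log (gaussPdf n σ (z - x))) ∂μ = pZ n σ μ z := by
  simp only [Real.exp_log (gaussPdf_pos hσ _), pZ]

theorem pZ_pos [IsFiniteMeasure μ] [NeZero μ] (hσ : σ ≠ 0) (z : EuclideanSpace ℝ (Fin n)) :
    0 < pZ n σ μ z := by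
  rw [← integral_exp_log_gaussPdf_sub μ hσ]
  exact integral_exp_pos (integrable_exp_log_gaussPdf_sub μ hσ z)

theorem continuous_pZ [IsFiniteMeasure μ] : Continuous (pZ n σ μ) :=
  continuous_integral_comp_sub_of_bounded continuous_gaussPdf norm_gaussPdf_le

theorem mmse_eq_sub [IsFiniteMeasure μ] [NeZero μ] (hσ : σ ≠ 0) (z : EuclideanSpace ℝ (Fin n)) :
    mmse n σ μ z = z - (pZ n σ μ z)⁻¹ • ∫ x, gaussPdf n σ (z - x) • (z - x) ∂μ := by
  have hsplit : ∫ x, gaussPdf n σ (z - x) • (z - x) ∂μ =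
      pZ n σ μ z • z - ∫ x, gaussPdf n σ (z - x) • x ∂μ := by
    simp only [smul_sub]
    rw [integral_sub ((integrable_gaussPdf_sub μ z).smul_const z)
      (integrable_gaussPdf_sub_smul μ hσ z), integral_smul_const, pZ]
  rw [hsplit, smul_sub, inv_smul_smul₀ (pZ_pos μ hσ z).ne', sub_sub_cancel, mmse]

theorem continuous_mmse [IsFiniteMeasure μ] [NeZero μ] (hσ : σ ≠ 0) :
    Continuous (mmse n σ μ) := by
  rw [funext (mmse_eq_sub μ hσ)]
  have hresidual : Continuous fun z => ∫ x, gaussPdf n σ (z - x) • (z - x) ∂μ :=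
    continuous_integral_comp_sub_of_bounded (h := fun v => gaussPdf n σ v • v)
      (continuous_gaussPdf.smul continuous_id) (norm_gaussPdf_smul_self_le hσ)
  exact continuous_id.sub
    (((continuous_pZ μ).inv₀ fun z => (pZ_pos μ hσ z).ne').smul hresidual)

/-- The conditional law of `X` given `Z = z`: by Bayes' rule, the law `μ` of `X` reweighted by the
likelihood `x ↦ gaussPdf n σ (z - x)` and normalized. Writing the likelihood as the exponential of
its logarithm makes this an exponential tilting of `μ`. -/
def gaussPosterior (n : ℕ) (σ : ℝ) (μ : Measure (EuclideanSpace ℝ (Fin n)))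
    (z : EuclideanSpace ℝ (Fin n)) : Measure (EuclideanSpace ℝ (Fin n)) :=
  μ.tilted fun x => Real.log (gaussPdf n σ (z - x))

theorem isProbabilityMeasure_gaussPosterior [IsFiniteMeasure μ] [NeZero μ] (hσ : σ ≠ 0)
    (z : EuclideanSpace ℝ (Fin n)) : IsProbabilityMeasure (gaussPosterior n σ μ z) :=
  isProbabilityMeasure_tilted (integrable_exp_log_gaussPdf_sub μ hσ z)

theorem integrable_id_gaussPosterior [IsFiniteMeasure μ] (hσ : σ ≠ 0)
    (z : EuclideanSpace ℝ (Fin n)) : Integrable (fun x => x) (gaussPosterior n σ μ z) := by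
  rw [gaussPosterior, integrable_tilted_iff (integrable_exp_log_gaussPdf_sub μ hσ z)]
  simpa only [Real.exp_log (gaussPdf_pos hσ _)] using integrable_gaussPdf_sub_smul μ hσ z

theorem integral_id_gaussPosterior (hσ : σ ≠ 0) (z : EuclideanSpace ℝ (Fin n)) :
    ∫ x, x ∂gaussPosterior n σ μ z = mmse n σ μ z := by
  simp only [gaussPosterior, integral_tilted, Real.exp_log (gaussPdf_pos hσ _), div_eq_inv_mul,
    mul_smul, integral_smul, mmse, pZ]

theorem integrable_const_sub_gaussPosterior [IsFiniteMeasure μ] [NeZero μ] (hσ : σ ≠ 0)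
    (z : EuclideanSpace ℝ (Fin n)) : Integrable (fun x => z - x) (gaussPosterior n σ μ z) :=
  have := isProbabilityMeasure_gaussPosterior μ hσ z
  (integrable_const z).sub (integrable_id_gaussPosterior μ hσ z)

theorem integral_const_sub_gaussPosterior [IsFiniteMeasure μ] [NeZero μ] (hσ : σ ≠ 0)
    (z : EuclideanSpace ℝ (Fin n)) :
    ∫ x, (z - x) ∂gaussPosterior n σ μ z = z - mmse n σ μ z := by
  have := isProbabilityMeasure_gaussPosterior μ hσ z
  rw [integral_sub (integrable_const z) (integrable_id_gaussPosterior μ hσ z), integral_const,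
    probReal_univ, one_smul, integral_id_gaussPosterior μ hσ]

theorem log_gaussPdf_sub_sub_log_gaussPdf_sub (hσ : σ ≠ 0) (x y z : EuclideanSpace ℝ (Fin n)) :
    Real.log (gaussPdf n σ (y - x)) - Real.log (gaussPdf n σ (z - x)) =
      -(⟪(σ ^ 2)⁻¹ • (z - x), y - z⟫ + (2 * σ ^ 2)⁻¹ * ‖y - z‖ ^ 2) := by
  rw [log_gaussPdf_sub_log_gaussPdf hσ, ← sub_add_sub_cancel' z x y, norm_add_sq_real,
    real_inner_smul_left]
  field_simp
  ring

theorem neg_log_pZ_sub_le [IsFiniteMeasure μ] [NeZero μ] (hσ : σ ≠ 0)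
    (z y : EuclideanSpace ℝ (Fin n)) :
    -Real.log (pZ n σ μ y) - -Real.log (pZ n σ μ z) ≤
      ⟪(σ ^ 2)⁻¹ • (z - mmse n σ μ z), y - z⟫ + (2 * σ ^ 2)⁻¹ * ‖y - z‖ ^ 2 := by
  have := isProbabilityMeasure_gaussPosterior μ hσ z
  have hresidual := integrable_const_sub_gaussPosterior μ hσ z
  have hinner : Integrable (fun x => ⟪(σ ^ 2)⁻¹ • (z - x), y - z⟫) (gaussPosterior n σ μ z) :=
    (hresidual.smul (σ ^ 2)⁻¹).inner_const _
  have hbound := integral_sub_tilted_le_log_integral_exp_sub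
    (integrable_exp_log_gaussPdf_sub μ hσ z) (integrable_exp_log_gaussPdf_sub μ hσ y) (by
      simp only [log_gaussPdf_sub_sub_log_gaussPdf_sub hσ]
      exact (hinner.add (integrable_const _)).neg)
  have hmean : ∫ x, ⟪(σ ^ 2)⁻¹ • (z - x), y - z⟫ ∂gaussPosterior n σ μ z =
      ⟪(σ ^ 2)⁻¹ • (z - mmse n σ μ z), y - z⟫ := by
    simp only [real_inner_comm (y - z), inner_smul_right, integral_const_mul,
      integral_inner hresidual, integral_const_sub_gaussPosterior μ hσ]
  simp only [log_gaussPdf_sub_sub_log_gaussPdf_sub hσ, integral_exp_log_gaussPdf_sub μ hσ,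
    integral_neg] at hbound
  rw [← gaussPosterior, integral_add hinner (integrable_const _), integral_const, probReal_univ,
    one_smul, hmean] at hbound
  linarith

theorem hasGradientAt_neg_log_pZ [IsFiniteMeasure μ] [NeZero μ] (hσ : σ ≠ 0)
    (z : EuclideanSpace ℝ (Fin n)) :
    HasGradientAt (fun w => -Real.log (pZ n σ μ w)) ((σ ^ 2)⁻¹ • (z - mmse n σ μ z)) z := by
  have hcont := continuous_mmse μ hσ
  exact hasGradientAt_of_sub_le_inner_add_norm_sq
    (f' := fun z => (σ ^ 2)⁻¹ • (z - mmse n σ μ z)) (neg_log_pZ_sub_le μ hσ) (by fun_prop)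

end Gaussian

section Moreau

variable {n : ℕ} {φ : EuclideanSpace ℝ (Fin n) → EReal}

theorem coe_moreauEnv1_eq_of_isMinOn (hproper : ∃ x, φ x ≠ ⊤) (hnbot : ∀ x, φ x ≠ ⊥)
    {x u : EuclideanSpace ℝ (Fin n)}
    (hu : IsMinOn (fun w => φ w + ((‖w - x‖ ^ 2 / 2 : ℝ) : EReal)) Set.univ u) :
    (moreauEnv1 φ x : EReal) = φ u + ((‖u - x‖ ^ 2 / 2 : ℝ) : EReal) := by
  have hmin (w) : φ u + ((‖u - x‖ ^ 2 / 2 : ℝ) : EReal) ≤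
      φ w + ((‖w - x‖ ^ 2 / 2 : ℝ) : EReal) := hu (Set.mem_univ w)
  obtain ⟨w, hw⟩ := hproper
  have hfinite : φ u + ((‖u - x‖ ^ 2 / 2 : ℝ) : EReal) ≠ ⊤ :=
    ((hmin w).trans_lt (EReal.add_lt_top hw (EReal.coe_ne_top _))).ne
  have hinf : ⨅ w, (φ w + ((‖w - x‖ ^ 2 / 2 : ℝ) : EReal)) =
      φ u + ((‖u - x‖ ^ 2 / 2 : ℝ) : EReal) := le_antisymm (iInf_le _ u) (le_iInf hmin)
  rw [moreauEnv1, hinf, EReal.coe_toReal hfinite]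
  exact (EReal.add_ne_bot_iff).2 ⟨hnbot u, EReal.coe_ne_bot _⟩

theorem moreauEnv1_sub_le (hproper : ∃ x, φ x ≠ ⊤) (hnbot : ∀ x, φ x ≠ ⊥)
    {x y u v : EuclideanSpace ℝ (Fin n)}
    (hu : IsMinOn (fun w => φ w + ((‖w - x‖ ^ 2 / 2 : ℝ) : EReal)) Set.univ u)
    (hv : IsMinOn (fun w => φ w + ((‖w - y‖ ^ 2 / 2 : ℝ) : EReal)) Set.univ v) :
    moreauEnv1 φ y - moreauEnv1 φ x ≤ ⟪x - u, y - x⟫ + 2⁻¹ * ‖y - x‖ ^ 2 := by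
  have hx := coe_moreauEnv1_eq_of_isMinOn hproper hnbot hu
  have hy : (moreauEnv1 φ y : EReal) ≤ φ u + ((‖u - y‖ ^ 2 / 2 : ℝ) : EReal) :=
    (coe_moreauEnv1_eq_of_isMinOn hproper hnbot hv).trans_le (hv (Set.mem_univ u))
  have hφu : φ u ≠ ⊤ := fun h => by simp [h] at hx
  lift φ u to ℝ using ⟨hφu, hnbot u⟩ with a
  norm_cast at hx hy
  have hexpand : ‖u - y‖ ^ 2 = ‖u - x‖ ^ 2 + 2 * ⟪x - u, y - x⟫ + ‖y - x‖ ^ 2 := by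
    rw [norm_sub_rev u y, norm_sub_rev u x, ← sub_add_sub_cancel' x u y, norm_add_sq_real]
  linarith

theorem hasGradientAt_moreauEnv1 (hproper : ∃ x, φ x ≠ ⊤) (hnbot : ∀ x, φ x ≠ ⊥)
    {p : EuclideanSpace ℝ (Fin n) → EuclideanSpace ℝ (Fin n)} (hp : Continuous p)
    (hmin : ∀ x, IsMinOn (fun w => φ w + ((‖w - x‖ ^ 2 / 2 : ℝ) : EReal)) Set.univ (p x))
    (x : EuclideanSpace ℝ (Fin n)) : HasGradientAt (moreauEnv1 φ) (x - p x) x :=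
  hasGradientAt_of_sub_le_inner_add_norm_sq (f' := fun x => x - p x)
    (fun x y => moreauEnv1_sub_le hproper hnbot (hmin x) (hmin y))
    (continuous_id.sub hp).continuousAt

end Moreau

theorem stmt_8_general {n : ℕ} {σ : ℝ} (hσ : σ ≠ 0)
    (μ : Measure (EuclideanSpace ℝ (Fin n))) [IsFiniteMeasure μ] [NeZero μ]
    {φ : EuclideanSpace ℝ (Fin n) → EReal} (hproper : ∃ x, φ x ≠ ⊤) (hnbot : ∀ x, φ x ≠ ⊥)
    (hmin : ∀ x, IsMinOn (fun w => φ w + ((‖w - x‖ ^ 2 / 2 : ℝ) : EReal)) Set.univ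
      (mmse n σ μ x)) :
    (∀ x, HasGradientAt (fun w => -Real.log (pZ n σ μ w)) ((σ ^ 2)⁻¹ • (x - mmse n σ μ x)) x ∧
        HasGradientAt (moreauEnv1 φ) (x - mmse n σ μ x) x) ∧
      ∃ C : ℝ, ∀ x, -Real.log (pZ n σ μ x) = (1 / σ ^ 2) * moreauEnv1 φ x + C := by
  have hlog := hasGradientAt_neg_log_pZ μ hσ
  have henv := hasGradientAt_moreauEnv1 hproper hnbot (continuous_mmse μ hσ) hmin
  have hscaled (x) : HasGradientAt (fun x => (1 / σ ^ 2) * moreauEnv1 φ x)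
      ((σ ^ 2)⁻¹ • (x - mmse n σ μ x)) x := by
    rw [hasGradientAt_iff_hasFDerivAt, map_smul, one_div]
    exact (henv x).hasFDerivAt.const_mul _
  exact ⟨fun x => ⟨hlog x, henv x⟩, exists_eq_add_const_of_hasGradientAt hlog hscaled⟩

theorem stmt_8 {n : ℕ} (σ : ℝ) (hσ : 0 < σ)
    (μ : Measure (EuclideanSpace ℝ (Fin n))) [IsProbabilityMeasure μ]
    (hmom : Integrable (fun x => x) μ)
    (φ : EuclideanSpace ℝ (Fin n) → EReal)
    (hproper : ∃ x, φ x ≠ ⊤) (hnbot : ∀ x, φ x ≠ ⊥)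
    (hlsc : LowerSemicontinuous φ)
    (p : EuclideanSpace ℝ (Fin n) → EuclideanSpace ℝ (Fin n))
    (hp_cont : Continuous p)
    (hp_prox : ∀ x z,
      IsMinOn (fun w => φ w + ((‖w - x‖ ^ 2 / 2 : ℝ) : EReal)) Set.univ z ↔ z = p x)
    (hψ : ∀ z, mmse n σ μ z = p z) :
    (∀ x g h, HasGradientAt (fun w => -Real.log (pZ n σ μ w)) g x →
        HasGradientAt (moreauEnv1 φ) h x → (σ ^ 2 : ℝ) • g = h) ∧
    ∃ C : ℝ, ∀ x, -Real.log (pZ n σ μ x) = (1 / σ ^ 2) * moreauEnv1 φ x + C := by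
  obtain ⟨hgrad, hconst⟩ :=
    stmt_8_general hσ.ne' μ hproper hnbot fun x => (hp_prox x _).2 (hψ x)
  refine ⟨fun x g h hg hh => ?_, hconst⟩
  rw [hg.unique (hgrad x).1, hh.unique (hgrad x).2, smul_inv_smul₀ (by positivity)]
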